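/- Let (η, α, U, A, φ, σ) be a solution of the Gowdy symmetric IIA system on (T₋,T₊) with 0 < T₋ < t_i < T₊ < ∞, and assume T₊ < ∞. Then the functions U and φ are bounded on [t_i,T₊) × S¹. -/

import Mathlib

/-!
The idea is an energy estimate. Write `𝓔` for the kinetic energy density `calE` and
`V = α Q² exp (2λφ + 2(η - U))`, so that `α̇ = -t α V` and `η̇ = t (𝓔 + V/4)`.

* The energy `E(t) = ∫ α^(-1/2) (𝓔 + V/4) dθ` is nonincreasing. Each field satisfies a wave
  equation in divergence form (`pt_kin`); in the sum, the terms containing `V` cancel, and the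
  remainder is a `θ`-derivative of a periodic flux plus friction terms of favourable sign
  (`GowdySolution.pt_dens_le`, `GowdySolution.energy_antitone`).
* Since `∂ₜ α^(-1/2) = (t/2) α^(-1/2) V`, the energy bounds the growth of `∫ α^(-1/2) dθ`, which
  therefore stays bounded in finite time (`GowdySolution.exists_bound_inv_sqrt`), even though `α`
  itself may approach zero. As `α` decreases in time, `∫ α^(1/2) dθ` is bounded too.
* For `f = U` or `φ`, the arithmetic-geometric mean inequality gives
  `2|f'| ≤ α^(1/2) f'² + α^(-1/2)` and `2|ḟ| ≤ α^(-1/2) ḟ² + α^(1/2)`, so `f'` and `ḟ` are bounded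
  in `L¹` of the circle uniformly in `t`. The former bounds the oscillation of `f` on the circle,
  the latter its mean (`exists_bound_of_L1_bounds`).
-/

noncomputable section

open Real Set MeasureTheory Filter

/-- Partial derivative in the first (time) variable. -/
def pt (f : ℝ → ℝ → ℝ) : ℝ → ℝ → ℝ := fun t θ => deriv (fun s => f s θ) t

/-- Partial derivative in the second (angle) variable. -/
def pth (f : ℝ → ℝ → ℝ) : ℝ → ℝ → ℝ := fun t θ => deriv (fun x => f t x) θ

/-- The full Gowdy symmetric IIA system (both constraints, the equation for `α`,
and the four evolution equations) holding at all times in `S` (dot = `pt`,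
prime = `pth`). -/
structure IsGowdyIIA (Q lam : ℝ) (S : Set ℝ) (η α U A φ σ : ℝ → ℝ → ℝ) : Prop where
  alpha_pos : ∀ t ∈ S, ∀ θ : ℝ, 0 < α t θ
  constraint_t : ∀ t ∈ S, ∀ θ : ℝ,
    pt η t θ / t =
      (pt U t θ) ^ 2 + α t θ * (pth U t θ) ^ 2
      + exp (4 * U t θ) / (4 * t ^ 2) * ((pt A t θ) ^ 2 + α t θ * (pth A t θ) ^ 2)
      + (1 / 4) * ((pt φ t θ) ^ 2 + α t θ * (pth φ t θ) ^ 2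
          + exp (2 * lam * φ t θ) * ((pt σ t θ) ^ 2 + α t θ * (pth σ t θ) ^ 2)
          + α t θ * Q ^ 2 * exp (2 * lam * φ t θ + 2 * (η t θ - U t θ)))
  constraint_θ : ∀ t ∈ S, ∀ θ : ℝ,
    pth η t θ / t =
      2 * pt U t θ * pth U t θ
      + exp (4 * U t θ) / (2 * t ^ 2) * (pt A t θ * pth A t θ)
      - pth α t θ / (2 * t * α t θ)
      + (1 / 2) * (pt φ t θ * pth φ t θ
          + exp (2 * lam * φ t θ) * (pt σ t θ * pth σ t θ))
  constraint_α : ∀ t ∈ S, ∀ θ : ℝ,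
    pt α t θ = - t * (α t θ) ^ 2 * Q ^ 2 * exp (2 * lam * φ t θ + 2 * (η t θ - U t θ))
  evol_U : ∀ t ∈ S, ∀ θ : ℝ,
    pt (pt U) t θ - α t θ * pth (pth U) t θ =
      - pt U t θ / t + pt α t θ * pt U t θ / (2 * α t θ) + pth α t θ * pth U t θ / 2
      + exp (4 * U t θ) / (2 * t ^ 2) * ((pt A t θ) ^ 2 - α t θ * (pth A t θ) ^ 2)
      + (1 / 4) * α t θ * Q ^ 2 * exp (2 * lam * φ t θ + 2 * (η t θ - U t θ))
  evol_A : ∀ t ∈ S, ∀ θ : ℝ,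
    pt (pt A) t θ - α t θ * pth (pth A) t θ =
      pt A t θ / t + pt α t θ * pt A t θ / (2 * α t θ) + pth α t θ * pth A t θ / 2
      - 4 * (pt A t θ * pt U t θ - α t θ * pth A t θ * pth U t θ)
  evol_φ : ∀ t ∈ S, ∀ θ : ℝ,
    pt (pt φ) t θ - α t θ * pth (pth φ) t θ =
      - pt φ t θ / t + pt α t θ * pt φ t θ / (2 * α t θ) + pth α t θ * pth φ t θ / 2
      + lam * exp (2 * lam * φ t θ) * ((pt σ t θ) ^ 2 - α t θ * (pth σ t θ) ^ 2)
      - lam * α t θ * Q ^ 2 * exp (2 * lam * φ t θ + 2 * (η t θ - U t θ))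
  evol_σ : ∀ t ∈ S, ∀ θ : ℝ,
    pt (pt σ) t θ - α t θ * pth (pth σ) t θ =
      - pt σ t θ / t + pt α t θ * pt σ t θ / (2 * α t θ) + pth α t θ * pth σ t θ / 2
      - 2 * lam * (pt φ t θ * pt σ t θ - α t θ * pth φ t θ * pth σ t θ)

/-- A smooth, spatially `2π`-periodic solution of the Gowdy symmetric IIA system
on the areal time interval `(Tm, Tp)`. -/
structure GowdySolution (Q lam Tm Tp : ℝ) where
  η : ℝ → ℝ → ℝ
  α : ℝ → ℝ → ℝ
  U : ℝ → ℝ → ℝ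
  A : ℝ → ℝ → ℝ
  φ : ℝ → ℝ → ℝ
  σ : ℝ → ℝ → ℝ
  smooth : ∀ f ∈ ([η, α, U, A, φ, σ] : List (ℝ → ℝ → ℝ)),
    ContDiffOn ℝ (⊤ : ℕ∞) (fun p : ℝ × ℝ => f p.1 p.2) (Ioo Tm Tp ×ˢ (univ : Set ℝ))
  periodic : ∀ f ∈ ([η, α, U, A, φ, σ] : List (ℝ → ℝ → ℝ)), ∀ t θ : ℝ,
    f t (θ + 2 * π) = f t θ
  sys : IsGowdyIIA Q lam (Ioo Tm Tp) η α U A φ σ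

/-- The energy density `𝓔`. -/
def calE (lam : ℝ) (α U A φ σ : ℝ → ℝ → ℝ) (t θ : ℝ) : ℝ :=
  (pt U t θ) ^ 2 + α t θ * (pth U t θ) ^ 2
  + exp (4 * U t θ) / (4 * t ^ 2) * ((pt A t θ) ^ 2 + α t θ * (pth A t θ) ^ 2)
  + (1 / 4) * ((pt φ t θ) ^ 2 + α t θ * (pth φ t θ) ^ 2
      + exp (2 * lam * φ t θ) * ((pt σ t θ) ^ 2 + α t θ * (pth σ t θ) ^ 2))

/-- The energy `E(t)` (integral over the circle `S¹ = [0, 2π]`). -/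
def energyE (Q lam : ℝ) (η α U A φ σ : ℝ → ℝ → ℝ) (t : ℝ) : ℝ :=
  ∫ θ in Ioc (0 : ℝ) (2 * π),
    (1 / Real.sqrt (α t θ)) *
      (calE lam α U A φ σ t θ
        + (1 / 4) * α t θ * Q ^ 2 * exp (2 * (η t θ + lam * φ t θ - U t θ)))

/-- The energy `Ẽ(t)`. -/
def energyEt (lam : ℝ) (α U A φ σ : ℝ → ℝ → ℝ) (t : ℝ) : ℝ :=
  ∫ θ in Ioc (0 : ℝ) (2 * π), calE lam α U A φ σ t θ / Real.sqrt (α t θ)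

/-- The timelike convergence condition (TCC) for the Gowdy symmetric IIA system. -/
def TCC (Q lam Tm Tp : ℝ) (η α U φ σ : ℝ → ℝ → ℝ) : Prop :=
  ∀ t ∈ Ioo Tm Tp, ∀ θ : ℝ,
    (pt φ t θ) ^ 2 + exp (2 * lam * φ t θ) * (pt σ t θ) ^ 2
      ≥ (1 / 2) * α t θ * Q ^ 2 * exp (2 * (η t θ + lam * φ t θ - U t θ))

/-! ### Smooth functions on the strip `(a, b) × ℝ` -/

/-- `f` is smooth, as a function of two variables, on the open strip `(a, b) × ℝ`. -/
def StripSmooth (a b : ℝ) (f : ℝ → ℝ → ℝ) : Prop :=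
  ContDiffOn ℝ (⊤ : ℕ∞) (fun p : ℝ × ℝ => f p.1 p.2) (Ioo a b ×ˢ (univ : Set ℝ))

namespace StripSmooth

variable {a b : ℝ} {f g : ℝ → ℝ → ℝ}

lemma contDiffAt (hf : StripSmooth a b f) {t : ℝ} (ht : t ∈ Ioo a b) (θ : ℝ) :
    ContDiffAt ℝ (⊤ : ℕ∞) (fun p : ℝ × ℝ => f p.1 p.2) (t, θ) :=
  ContDiffOn.contDiffAt hf ((isOpen_Ioo.prod isOpen_univ).mem_nhds ⟨ht, mem_univ _⟩)

lemma hasFDerivAt (hf : StripSmooth a b f) {t : ℝ} (ht : t ∈ Ioo a b) (θ : ℝ) :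
    HasFDerivAt (fun p : ℝ × ℝ => f p.1 p.2)
      (fderiv ℝ (fun p : ℝ × ℝ => f p.1 p.2) (t, θ)) (t, θ) :=
  ((hf.contDiffAt ht θ).differentiableAt (by simp)).hasFDerivAt

lemma hasDerivAt_fst (hf : StripSmooth a b f) {t : ℝ} (ht : t ∈ Ioo a b) (θ : ℝ) :
    HasDerivAt (fun s => f s θ) (fderiv ℝ (fun p : ℝ × ℝ => f p.1 p.2) (t, θ) (1, 0)) t :=
  (hf.hasFDerivAt ht θ).comp_hasDerivAt (f := fun s => (s, θ)) t
    (HasDerivAt.prodMk (hasDerivAt_id t) (hasDerivAt_const t θ))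

lemma hasDerivAt_snd (hf : StripSmooth a b f) {t : ℝ} (ht : t ∈ Ioo a b) (θ : ℝ) :
    HasDerivAt (fun x => f t x) (fderiv ℝ (fun p : ℝ × ℝ => f p.1 p.2) (t, θ) (0, 1)) θ :=
  (hf.hasFDerivAt ht θ).comp_hasDerivAt θ
    (HasDerivAt.prodMk (hasDerivAt_const θ t) (hasDerivAt_id θ))

lemma pt_eq (hf : StripSmooth a b f) {t : ℝ} (ht : t ∈ Ioo a b) (θ : ℝ) :
    pt f t θ = fderiv ℝ (fun p : ℝ × ℝ => f p.1 p.2) (t, θ) (1, 0) :=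
  (hf.hasDerivAt_fst ht θ).deriv

lemma pth_eq (hf : StripSmooth a b f) {t : ℝ} (ht : t ∈ Ioo a b) (θ : ℝ) :
    pth f t θ = fderiv ℝ (fun p : ℝ × ℝ => f p.1 p.2) (t, θ) (0, 1) :=
  (hf.hasDerivAt_snd ht θ).deriv

lemma hasDerivAt_pt (hf : StripSmooth a b f) {t : ℝ} (ht : t ∈ Ioo a b) (θ : ℝ) :
    HasDerivAt (fun s => f s θ) (pt f t θ) t := by
  rw [hf.pt_eq ht]; exact hf.hasDerivAt_fst ht θ

lemma hasDerivAt_pth (hf : StripSmooth a b f) {t : ℝ} (ht : t ∈ Ioo a b) (θ : ℝ) :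
    HasDerivAt (fun x => f t x) (pth f t θ) θ := by
  rw [hf.pth_eq ht]; exact hf.hasDerivAt_snd ht θ

lemma contDiffOn_fderiv (hf : StripSmooth a b f) :
    ContDiffOn ℝ (⊤ : ℕ∞) (fderiv ℝ (fun p : ℝ × ℝ => f p.1 p.2))
      (Ioo a b ×ˢ (univ : Set ℝ)) :=
  ContDiffOn.fderiv_of_isOpen hf (isOpen_Ioo.prod isOpen_univ) (by simp)

lemma pt (hf : StripSmooth a b f) : StripSmooth a b (pt f) := by
  have h : ContDiffOn ℝ (⊤ : ℕ∞)
      (fun p => fderiv ℝ (fun p : ℝ × ℝ => f p.1 p.2) p ((1, 0) : ℝ × ℝ))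
      (Ioo a b ×ˢ (univ : Set ℝ)) := hf.contDiffOn_fderiv.clm_apply contDiffOn_const
  exact h.congr fun p hp => hf.pt_eq hp.1 p.2

lemma pth (hf : StripSmooth a b f) : StripSmooth a b (pth f) := by
  have h : ContDiffOn ℝ (⊤ : ℕ∞)
      (fun p => fderiv ℝ (fun p : ℝ × ℝ => f p.1 p.2) p ((0, 1) : ℝ × ℝ))
      (Ioo a b ×ˢ (univ : Set ℝ)) := hf.contDiffOn_fderiv.clm_apply contDiffOn_const
  exact h.congr fun p hp => hf.pth_eq hp.1 p.2

/-- Equality of mixed partial derivatives. -/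
lemma pt_pth_comm (hf : StripSmooth a b f) {t : ℝ} (ht : t ∈ Ioo a b) (θ : ℝ) :
    _root_.pt (_root_.pth f) t θ = _root_.pth (_root_.pt f) t θ := by
  set F : ℝ × ℝ → ℝ := fun p => f p.1 p.2 with hF
  have hd : HasFDerivAt (fderiv ℝ F) (fderiv ℝ (fderiv ℝ F) (t, θ)) (t, θ) :=
    (((hf.contDiffOn_fderiv).contDiffAt
      ((isOpen_Ioo.prod isOpen_univ).mem_nhds ⟨ht, mem_univ _⟩)).differentiableAt
        (by simp)).hasFDerivAt
  have h1 : HasDerivAt (fun s => fderiv ℝ F (s, θ) (0, 1))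
      (fderiv ℝ (fderiv ℝ F) (t, θ) (1, 0) (0, 1)) t := by
    have := (hd.comp_hasDerivAt t
      (HasDerivAt.prodMk (hasDerivAt_id t) (hasDerivAt_const t θ)))
    simpa using this.clm_apply (hasDerivAt_const t ((0, 1) : ℝ × ℝ))
  have h2 : HasDerivAt (fun x => fderiv ℝ F (t, x) (1, 0))
      (fderiv ℝ (fderiv ℝ F) (t, θ) (0, 1) (1, 0)) θ := by
    have := (hd.comp_hasDerivAt θ
      (HasDerivAt.prodMk (hasDerivAt_const θ t) (hasDerivAt_id θ)))
    simpa using this.clm_apply (hasDerivAt_const θ ((1, 0) : ℝ × ℝ))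
  have e1 : _root_.pt (_root_.pth f) t θ = fderiv ℝ (fderiv ℝ F) (t, θ) (1, 0) (0, 1) := by
    refine (h1.congr_of_eventuallyEq ?_).deriv
    filter_upwards [isOpen_Ioo.mem_nhds ht] with s hs using hf.pth_eq hs θ
  have e2 : _root_.pth (_root_.pt f) t θ = fderiv ℝ (fderiv ℝ F) (t, θ) (0, 1) (1, 0) := by
    refine (h2.congr_of_eventuallyEq ?_).deriv
    filter_upwards with x using hf.pt_eq ht x
  rw [e1, e2]
  exact (hf.contDiffAt ht θ).isSymmSndFDerivAt (by
    simpa using WithTop.coe_le_coe.2 (le_top : (2 : ℕ∞) ≤ ⊤)) _ _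

lemma continuous_snd (hf : StripSmooth a b f) {t : ℝ} (ht : t ∈ Ioo a b) :
    Continuous (fun θ => f t θ) :=
  continuous_iff_continuousAt.2 fun θ => (hf.hasDerivAt_snd ht θ).continuousAt

/-- Differentiation under the integral sign over one period. -/
lemma hasDerivAt_integral (hf : StripSmooth a b f) {t : ℝ} (ht : t ∈ Ioo a b) :
    HasDerivAt (fun s => ∫ θ in (0 : ℝ)..(2 * π), f s θ)
      (∫ θ in (0 : ℝ)..(2 * π), _root_.pt f t θ) t := by
  obtain ⟨c, hc1, hc2⟩ := exists_between ht.1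
  obtain ⟨d, hd1, hd2⟩ := exists_between ht.2
  have hsub : Icc c d ⊆ Ioo a b := fun x hx => ⟨hc1.trans_le hx.1, hx.2.trans_lt hd2⟩
  have hcont : ContinuousOn (fun p : ℝ × ℝ => _root_.pt f p.1 p.2)
      (Icc c d ×ˢ Icc 0 (2 * π)) :=
    (ContDiffOn.continuousOn hf.pt).mono (prod_mono hsub (subset_univ _))
  obtain ⟨C, hC⟩ := (isCompact_Icc.prod isCompact_Icc).exists_bound_of_continuousOn hcont
  refine (intervalIntegral.hasDerivAt_integral_of_dominated_loc_of_deriv_le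
    (F := f) (F' := _root_.pt f) (s := Icc c d) (bound := fun _ => C)
    (Icc_mem_nhds hc2 hd1) ?_ ?_ ?_ ?_ ?_ ?_).2
  · filter_upwards [isOpen_Ioo.mem_nhds ht] with s hs
    exact (hf.continuous_snd hs).aestronglyMeasurable
  · exact (hf.continuous_snd ht).intervalIntegrable _ _
  · exact (hf.pt.continuous_snd ht).aestronglyMeasurable
  · refine Eventually.of_forall fun θ hθ s hs => hC (s, θ) ⟨hs, ?_⟩
    rw [uIoc_of_le (by positivity)] at hθ
    exact Ioc_subset_Icc_self hθ
  · exact intervalIntegrable_const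
  · exact Eventually.of_forall fun θ _ s hs => hf.hasDerivAt_pt (hsub hs) θ

lemma add (hf : StripSmooth a b f) (hg : StripSmooth a b g) :
    StripSmooth a b (fun t θ => f t θ + g t θ) := ContDiffOn.add hf hg

lemma sub (hf : StripSmooth a b f) (hg : StripSmooth a b g) :
    StripSmooth a b (fun t θ => f t θ - g t θ) := ContDiffOn.sub hf hg

lemma mul (hf : StripSmooth a b f) (hg : StripSmooth a b g) :
    StripSmooth a b (fun t θ => f t θ * g t θ) := ContDiffOn.mul hf hg

lemma const (c : ℝ) : StripSmooth a b (fun _ _ => c) := contDiffOn_const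

lemma time : StripSmooth a b (fun t _ => t) := contDiffOn_fst

lemma pow (hf : StripSmooth a b f) (n : ℕ) :
    StripSmooth a b (fun t θ => f t θ ^ n) := ContDiffOn.pow hf n

lemma exp (hf : StripSmooth a b f) :
    StripSmooth a b (fun t θ => Real.exp (f t θ)) := ContDiffOn.exp hf

lemma sqrt (hf : StripSmooth a b f) (h : ∀ t ∈ Ioo a b, ∀ θ, 0 < f t θ) :
    StripSmooth a b (fun t θ => √(f t θ)) :=
  ContDiffOn.sqrt hf fun p hp => (h p.1 hp.1 p.2).ne'

lemma div (hf : StripSmooth a b f) (hg : StripSmooth a b g)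
    (h : ∀ t ∈ Ioo a b, ∀ θ, g t θ ≠ 0) :
    StripSmooth a b (fun t θ => f t θ / g t θ) :=
  ContDiffOn.div hf hg fun p hp => h p.1 hp.1 p.2

end StripSmooth

/-! ### The energy identity -/

/-- The weighted energy density `α^(-1/2) (ḟ² + α f'²)` of a single field `f`. -/
def kin (α f : ℝ → ℝ → ℝ) (t θ : ℝ) : ℝ :=
  pt f t θ ^ 2 / √(α t θ) + √(α t θ) * pth f t θ ^ 2

/-- The energy flux `2 α^(1/2) ḟ f'` of a single field `f`. -/
def flx (α f : ℝ → ℝ → ℝ) (t θ : ℝ) : ℝ :=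
  2 * √(α t θ) * (pt f t θ * pth f t θ)

lemma kin_nonneg (α f : ℝ → ℝ → ℝ) (t θ : ℝ) : 0 ≤ kin α f t θ := by
  unfold kin; positivity

section SingleField

variable {a b : ℝ} {α f : ℝ → ℝ → ℝ}

lemma stripSmooth_kin (hα : StripSmooth a b α) (hpos : ∀ t ∈ Ioo a b, ∀ θ, 0 < α t θ)
    (hf : StripSmooth a b f) : StripSmooth a b (kin α f) :=
  ((hf.pt.pow 2).div (hα.sqrt hpos) fun t ht θ => (Real.sqrt_pos.2 (hpos t ht θ)).ne').add
    ((hα.sqrt hpos).mul (hf.pth.pow 2))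

lemma stripSmooth_flx (hα : StripSmooth a b α) (hpos : ∀ t ∈ Ioo a b, ∀ θ, 0 < α t θ)
    (hf : StripSmooth a b f) : StripSmooth a b (flx α f) :=
  ((StripSmooth.const 2).mul (hα.sqrt hpos)).mul (hf.pt.mul hf.pth)

/-- Energy balance for one wave equation with source `S`. -/
lemma pt_kin (hα : StripSmooth a b α) (hpos : ∀ t ∈ Ioo a b, ∀ θ, 0 < α t θ)
    (hf : StripSmooth a b f) {t : ℝ} (ht : t ∈ Ioo a b) (θ S : ℝ)
    (hw : pt (pt f) t θ - α t θ * pth (pth f) t θ =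
      pt α t θ * pt f t θ / (2 * α t θ) + pth α t θ * pth f t θ / 2 + S) :
    pt (kin α f) t θ = pth (flx α f) t θ + 2 * pt f t θ * S / √(α t θ)
      + pt α t θ / (2 * α t θ) * kin α f t θ := by
  have hr0 : 0 < √(α t θ) := Real.sqrt_pos.2 (hpos t ht θ)
  have hα0 := (hpos t ht θ).ne'
  have hrt := (hα.hasDerivAt_pt ht θ).sqrt hα0
  have hrx := (hα.hasDerivAt_pth ht θ).sqrt hα0
  have h1 : HasDerivAt (fun s => kin α f s θ) _ t :=
    (((hf.pt.hasDerivAt_pt ht θ).pow 2).div hrt hr0.ne').add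
      (hrt.mul ((hf.pth.hasDerivAt_pt ht θ).pow 2))
  have h2 : HasDerivAt (fun x => flx α f t x) _ θ :=
    (hrx.const_mul 2).mul ((hf.pt.hasDerivAt_pth ht θ).mul (hf.pth.hasDerivAt_pth ht θ))
  have e1 := h1.deriv
  have e2 := h2.deriv
  change pt (kin α f) t θ = _ at e1
  change pth (flx α f) t θ = _ at e2
  rw [e1, e2, hf.pt_pth_comm ht θ, eq_add_of_sub_eq hw]
  have hsq : α t θ = √(α t θ) ^ 2 := (Real.sq_sqrt (hpos t ht θ).le).symm
  simp only [kin, Pi.pow_apply]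
  generalize √(α t θ) = r at *
  rw [hsq]
  field_simp
  ring

end SingleField

namespace GowdySolution

variable {Q lam Tm Tp : ℝ} (G : GowdySolution Q lam Tm Tp)

lemma smooth_η : StripSmooth Tm Tp G.η := G.smooth _ (by simp)
lemma smooth_α : StripSmooth Tm Tp G.α := G.smooth _ (by simp)
lemma smooth_U : StripSmooth Tm Tp G.U := G.smooth _ (by simp)
lemma smooth_A : StripSmooth Tm Tp G.A := G.smooth _ (by simp)
lemma smooth_φ : StripSmooth Tm Tp G.φ := G.smooth _ (by simp)
lemma smooth_σ : StripSmooth Tm Tp G.σ := G.smooth _ (by simp)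

/-- The exponential `exp (2λφ + 2(η - U))` of the potential term. -/
def pot (t θ : ℝ) : ℝ := Real.exp (2 * lam * G.φ t θ + 2 * (G.η t θ - G.U t θ))

/-- The total energy density; it equals the integrand of `energyE`. -/
def dens (t θ : ℝ) : ℝ :=
  kin G.α G.U t θ + Real.exp (4 * G.U t θ) / (4 * t ^ 2) * kin G.α G.A t θ
    + 1 / 4 * (kin G.α G.φ t θ + Real.exp (2 * lam * G.φ t θ) * kin G.α G.σ t θ)
    + 1 / 4 * Q ^ 2 * (√(G.α t θ) * G.pot t θ)

/-- The total energy flux through a point of the circle. -/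
def flux (t θ : ℝ) : ℝ :=
  flx G.α G.U t θ + Real.exp (4 * G.U t θ) / (4 * t ^ 2) * flx G.α G.A t θ
    + 1 / 4 * (flx G.α G.φ t θ + Real.exp (2 * lam * G.φ t θ) * flx G.α G.σ t θ)

lemma smooth_pot : StripSmooth Tm Tp G.pot :=
  (((StripSmooth.const (2 * lam)).mul G.smooth_φ).add
    ((StripSmooth.const 2).mul (G.smooth_η.sub G.smooth_U))).exp

lemma smooth_sqrt : StripSmooth Tm Tp (fun t θ => √(G.α t θ)) :=
  G.smooth_α.sqrt G.sys.alpha_pos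

lemma smooth_kin {f : ℝ → ℝ → ℝ} (hf : StripSmooth Tm Tp f) : StripSmooth Tm Tp (kin G.α f) :=
  stripSmooth_kin G.smooth_α G.sys.alpha_pos hf

lemma smooth_flx {f : ℝ → ℝ → ℝ} (hf : StripSmooth Tm Tp f) : StripSmooth Tm Tp (flx G.α f) :=
  stripSmooth_flx G.smooth_α G.sys.alpha_pos hf

lemma smooth_coeff (hTm : 0 < Tm) :
    StripSmooth Tm Tp (fun t θ => Real.exp (4 * G.U t θ) / (4 * t ^ 2)) :=
  ((StripSmooth.const 4).mul G.smooth_U).exp.div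
    ((StripSmooth.const 4).mul (StripSmooth.time.pow 2)) fun t ht _ => by
      have : 0 < t := hTm.trans ht.1
      positivity

lemma smooth_expφ : StripSmooth Tm Tp (fun t θ => Real.exp (2 * lam * G.φ t θ)) :=
  ((StripSmooth.const (2 * lam)).mul G.smooth_φ).exp

lemma smooth_dens (hTm : 0 < Tm) : StripSmooth Tm Tp G.dens :=
  (((G.smooth_kin G.smooth_U).add ((G.smooth_coeff hTm).mul (G.smooth_kin G.smooth_A))).add
    ((StripSmooth.const (1 / 4)).mul ((G.smooth_kin G.smooth_φ).add
      (G.smooth_expφ.mul (G.smooth_kin G.smooth_σ))))).add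
    ((StripSmooth.const (1 / 4 * Q ^ 2)).mul (G.smooth_sqrt.mul G.smooth_pot))

lemma smooth_flux (hTm : 0 < Tm) : StripSmooth Tm Tp G.flux :=
  ((G.smooth_flx G.smooth_U).add ((G.smooth_coeff hTm).mul (G.smooth_flx G.smooth_A))).add
    ((StripSmooth.const (1 / 4)).mul ((G.smooth_flx G.smooth_φ).add
      (G.smooth_expφ.mul (G.smooth_flx G.smooth_σ))))

/-- The local energy inequality. All terms containing the potential cancel, because
`α̇/α` is minus `t` times the potential energy while `η̇` is `t` times the total energy;
what remains is a flux divergence and friction terms with a favourable sign. -/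
lemma pt_dens_le (hTm : 0 < Tm) {t : ℝ} (ht : t ∈ Ioo Tm Tp) (θ : ℝ) :
    pt G.dens t θ ≤ pth G.flux t θ := by
  have ht0 : 0 < t := hTm.trans ht.1
  have hα0 := G.sys.alpha_pos t ht θ
  have hr0 : 0 < √(G.α t θ) := Real.sqrt_pos.2 hα0
  have hUt := G.smooth_U.hasDerivAt_pt ht θ
  have hφt := G.smooth_φ.hasDerivAt_pt ht θ
  have hηt := G.smooth_η.hasDerivAt_pt ht θ
  have hUx := G.smooth_U.hasDerivAt_pth ht θ
  have hφx := G.smooth_φ.hasDerivAt_pth ht θ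
  have hrt := (G.smooth_α.hasDerivAt_pt ht θ).sqrt hα0.ne'
  have hD : HasDerivAt (fun s => G.dens s θ) _ t :=
    ((((G.smooth_kin G.smooth_U).hasDerivAt_pt ht θ).add
      (((hUt.const_mul 4).exp.div (((hasDerivAt_id t).pow 2).const_mul 4)
        (by simp; positivity)).mul ((G.smooth_kin G.smooth_A).hasDerivAt_pt ht θ))).add
      ((((G.smooth_kin G.smooth_φ).hasDerivAt_pt ht θ).add
        ((hφt.const_mul (2 * lam)).exp.mul
          ((G.smooth_kin G.smooth_σ).hasDerivAt_pt ht θ))).const_mul (1 / 4))).add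
      ((hrt.mul ((hφt.const_mul (2 * lam)).add ((hηt.sub hUt).const_mul 2)).exp).const_mul
        (1 / 4 * Q ^ 2))
  have hF : HasDerivAt (fun x => G.flux t x) _ θ :=
    (((G.smooth_flx G.smooth_U).hasDerivAt_pth ht θ).add
      (((hUx.const_mul 4).exp.div_const (4 * t ^ 2)).mul
        ((G.smooth_flx G.smooth_A).hasDerivAt_pth ht θ))).add
      ((((G.smooth_flx G.smooth_φ).hasDerivAt_pth ht θ).add
        ((hφx.const_mul (2 * lam)).exp.mul
          ((G.smooth_flx G.smooth_σ).hasDerivAt_pth ht θ))).const_mul (1 / 4))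
  have e1 := hD.deriv
  have e2 := hF.deriv
  change pt G.dens t θ = _ at e1
  change pth G.flux t θ = _ at e2
  have kU := pt_kin G.smooth_α G.sys.alpha_pos G.smooth_U ht θ
    (- pt G.U t θ / t + Real.exp (4 * G.U t θ) / (2 * t ^ 2)
        * ((pt G.A t θ) ^ 2 - G.α t θ * (pth G.A t θ) ^ 2)
      + (1 / 4) * G.α t θ * Q ^ 2 * Real.exp (2 * lam * G.φ t θ + 2 * (G.η t θ - G.U t θ)))
    (by rw [G.sys.evol_U t ht θ]; ring)
  have kA := pt_kin G.smooth_α G.sys.alpha_pos G.smooth_A ht θ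
    (pt G.A t θ / t
      - 4 * (pt G.A t θ * pt G.U t θ - G.α t θ * pth G.A t θ * pth G.U t θ))
    (by rw [G.sys.evol_A t ht θ]; ring)
  have kφ := pt_kin G.smooth_α G.sys.alpha_pos G.smooth_φ ht θ
    (- pt G.φ t θ / t + lam * Real.exp (2 * lam * G.φ t θ)
        * ((pt G.σ t θ) ^ 2 - G.α t θ * (pth G.σ t θ) ^ 2)
      - lam * G.α t θ * Q ^ 2 * Real.exp (2 * lam * G.φ t θ + 2 * (G.η t θ - G.U t θ)))
    (by rw [G.sys.evol_φ t ht θ]; ring)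
  have kσ := pt_kin G.smooth_α G.sys.alpha_pos G.smooth_σ ht θ
    (- pt G.σ t θ / t
      - 2 * lam * (pt G.φ t θ * pt G.σ t θ - G.α t θ * pth G.φ t θ * pth G.σ t θ))
    (by rw [G.sys.evol_σ t ht θ]; ring)
  have hη := G.sys.constraint_t t ht θ
  rw [div_eq_iff ht0.ne'] at hη
  rw [kU, kA, kφ, kσ, G.sys.constraint_α t ht θ, hη] at e1
  have key : pt G.dens t θ - pth G.flux t θ =
      -(1 / (√(G.α t θ) * t)) * (2 * pt G.U t θ ^ 2
        + Real.exp (4 * G.U t θ) / (2 * t ^ 2) * (√(G.α t θ) * pth G.A t θ) ^ 2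
        + 1 / 2 * pt G.φ t θ ^ 2
        + 1 / 2 * (Real.exp (2 * lam * G.φ t θ) * pt G.σ t θ ^ 2)) := by
    rw [e1, e2]
    have hsq : G.α t θ = √(G.α t θ) ^ 2 := (Real.sq_sqrt hα0.le).symm
    simp only [kin, flx, Pi.pow_apply, Pi.div_apply, Pi.add_apply, Pi.sub_apply, id]
    generalize √(G.α t θ) = r at *
    rw [hsq]
    generalize Real.exp (4 * G.U t θ) = E4
    generalize Real.exp (2 * lam * G.φ t θ + 2 * (G.η t θ - G.U t θ)) = w
    generalize Real.exp (2 * lam * G.φ t θ) = E2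
    field_simp
    ring
  have : 0 ≤ (1 / (√(G.α t θ) * t)) * (2 * pt G.U t θ ^ 2
        + Real.exp (4 * G.U t θ) / (2 * t ^ 2) * (√(G.α t θ) * pth G.A t θ) ^ 2
        + 1 / 2 * pt G.φ t θ ^ 2
        + 1 / 2 * (Real.exp (2 * lam * G.φ t θ) * pt G.σ t θ ^ 2)) := by positivity
  linarith

end GowdySolution

/-! ### From integral bounds to pointwise bounds -/

lemma exists_bound_of_deriv_bound {c d K : ℝ} {F F' : ℝ → ℝ}
    (hF : ∀ t ∈ Ico c d, HasDerivAt F (F' t) t) (hK : ∀ t ∈ Ico c d, |F' t| ≤ K) :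
    ∃ C, ∀ t ∈ Ico c d, |F t| ≤ C := by
  refine ⟨|F c| + K * (d - c), fun t ht => ?_⟩
  have hc : c ∈ Ico c d := ⟨le_rfl, ht.1.trans_lt ht.2⟩
  have h := (convex_Ico c d).norm_image_sub_le_of_norm_hasDerivWithin_le
    (fun x hx => (hF x hx).hasDerivWithinAt) hK hc ht
  rw [Real.norm_eq_abs, Real.norm_eq_abs, abs_of_nonneg (sub_nonneg.2 ht.1)] at h
  have hK0 : 0 ≤ K := (abs_nonneg _).trans (hK c hc)
  have h2 : K * (t - c) ≤ K * (d - c) := by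
    have := ht.2.le
    gcongr
  have h3 := abs_sub_abs_le_abs_sub (F t) (F c)
  linarith

/-- A periodic function whose `t`- and `θ`-derivatives are bounded in `L¹` of the circle,
uniformly in `t`, is bounded: the `θ`-derivative controls the oscillation on the circle and the
`t`-derivative controls the mean. -/
lemma exists_bound_of_L1_bounds {a b c K : ℝ} (hac : a < c) {f : ℝ → ℝ → ℝ}
    (hf : StripSmooth a b f) (hper : ∀ t θ, f t (θ + 2 * π) = f t θ)
    (ht1 : ∀ t ∈ Ico c b, ∫ θ in (0 : ℝ)..(2 * π), |pt f t θ| ≤ K)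
    (hx1 : ∀ t ∈ Ico c b, ∫ θ in (0 : ℝ)..(2 * π), |pth f t θ| ≤ K) :
    ∃ C, ∀ t ∈ Ico c b, ∀ θ, |f t θ| ≤ C := by
  have hpi : (0 : ℝ) ≤ 2 * π := by positivity
  have hsub : ∀ t ∈ Ico c b, t ∈ Ioo a b := fun t ht => ⟨hac.trans_le ht.1, ht.2⟩
  obtain ⟨M, hM⟩ := exists_bound_of_deriv_bound
    (fun t ht => hf.hasDerivAt_integral (hsub t ht))
    (fun t ht => (intervalIntegral.abs_integral_le_integral_abs hpi).trans (ht1 t ht))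
  refine ⟨(K * (2 * π) + M) / (2 * π), fun t ht θ => ?_⟩
  have hcx : Continuous fun θ => pth f t θ := hf.pth.continuous_snd (hsub t ht)
  -- the oscillation of `f t` over one period is at most `K`
  have hosc : ∀ x ∈ Icc 0 (2 * π), ∀ y ∈ Icc 0 (2 * π), |f t x - f t y| ≤ K := by
    intro x hx y hy
    have hftc : ∫ z in y..x, pth f t z = f t x - f t y :=
      intervalIntegral.integral_eq_sub_of_hasDerivAt
        (fun z _ => hf.hasDerivAt_pth (hsub t ht) z) (hcx.intervalIntegrable _ _)
    rw [← hftc, ← Real.norm_eq_abs]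
    refine le_trans intervalIntegral.norm_integral_le_integral_norm_uIoc ?_
    refine le_trans ?_ (hx1 t ht)
    rw [intervalIntegral.integral_of_le hpi]
    refine setIntegral_mono_set ?_ ?_ ?_
    · exact (hcx.abs.integrableOn_Icc).mono_set Ioc_subset_Icc_self
    · exact Eventually.of_forall fun z => abs_nonneg _
    · exact (Ioc_subset_Ioc (le_min hy.1 hx.1) (max_le hy.2 hx.2)).eventuallyLE
  obtain ⟨x, hx, hfx⟩ := Function.Periodic.exists_mem_Ico₀ (hper t) (by positivity) θ
  rw [hfx]
  have hxI : x ∈ Icc 0 (2 * π) := ⟨hx.1, hx.2.le⟩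
  have hcf := hf.continuous_snd (hsub t ht)
  have hmean : |∫ y in (0 : ℝ)..(2 * π), (f t x - f t y)| ≤ K * |2 * π - 0| := by
    rw [← Real.norm_eq_abs]
    refine intervalIntegral.norm_integral_le_of_norm_le_const fun y hy => ?_
    rw [uIoc_of_le hpi] at hy
    exact hosc x hxI y (Ioc_subset_Icc_self hy)
  rw [intervalIntegral.integral_sub (by simp) (hcf.intervalIntegrable _ _),
    intervalIntegral.integral_const, sub_zero, abs_of_nonneg hpi, smul_eq_mul] at hmean
  rw [le_div_iff₀ (by positivity)]
  calc |f t x| * (2 * π) = |2 * π * f t x| := by rw [abs_mul, abs_of_nonneg hpi, mul_comm]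
    _ ≤ |2 * π * f t x - ∫ y in (0 : ℝ)..(2 * π), f t y|
        + |∫ y in (0 : ℝ)..(2 * π), f t y| := by
      simpa using abs_add_le (2 * π * f t x - ∫ y in (0 : ℝ)..(2 * π), f t y)
        (∫ y in (0 : ℝ)..(2 * π), f t y)
    _ ≤ K * (2 * π) + M := add_le_add hmean (hM t ht)

/-! ### Integral bounds for solutions -/

namespace GowdySolution

variable {Q lam Tm Tp : ℝ} (G : GowdySolution Q lam Tm Tp)

lemma pt_periodic {f : ℝ → ℝ → ℝ} (hper : ∀ t θ, f t (θ + 2 * π) = f t θ) (t θ : ℝ) :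
    pt f t (θ + 2 * π) = pt f t θ := by
  simp only [pt, hper]

lemma pth_periodic {f : ℝ → ℝ → ℝ} (hper : ∀ t θ, f t (θ + 2 * π) = f t θ) (t θ : ℝ) :
    pth f t (θ + 2 * π) = pth f t θ := by
  simp only [pth]
  rw [← deriv_comp_add_const]
  simp only [hper]

lemma flux_periodic (t θ : ℝ) : G.flux t (θ + 2 * π) = G.flux t θ := by
  have hα := G.periodic G.α (by simp)
  have hU := G.periodic G.U (by simp)
  have hA := G.periodic G.A (by simp)
  have hφ := G.periodic G.φ (by simp)
  have hσ := G.periodic G.σ (by simp)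
  simp only [flux, flx, hα, hU, hφ, pt_periodic hU, pth_periodic hU, pt_periodic hA,
    pth_periodic hA, pt_periodic hφ, pth_periodic hφ, pt_periodic hσ, pth_periodic hσ]

/-- The energy is nonincreasing: integrate the local energy inequality over one period. -/
lemma energy_antitone (hTm : 0 < Tm) :
    AntitoneOn (fun t => ∫ θ in (0 : ℝ)..(2 * π), G.dens t θ) (Ioo Tm Tp) := by
  have hd := G.smooth_dens hTm
  have hfl := G.smooth_flux hTm
  refine antitoneOn_of_deriv_nonpos (convex_Ioo _ _)
    (fun t ht => (hd.hasDerivAt_integral ht).continuousAt.continuousWithinAt)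
    (fun t ht => ((hd.hasDerivAt_integral
      (interior_subset ht)).differentiableAt).differentiableWithinAt) ?_
  intro t ht
  replace ht := interior_subset ht
  rw [(hd.hasDerivAt_integral ht).deriv]
  have hcx := hfl.pth.continuous_snd ht
  calc ∫ θ in (0 : ℝ)..(2 * π), pt G.dens t θ
      ≤ ∫ θ in (0 : ℝ)..(2 * π), pth G.flux t θ :=
        intervalIntegral.integral_mono (by positivity)
          ((hd.pt.continuous_snd ht).intervalIntegrable _ _) (hcx.intervalIntegrable _ _)
          fun θ => G.pt_dens_le hTm ht θ
    _ = G.flux t (2 * π) - G.flux t 0 :=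
        intervalIntegral.integral_eq_sub_of_hasDerivAt
          (fun z _ => hfl.hasDerivAt_pth ht z) (hcx.intervalIntegrable _ _)
    _ = 0 := by
        have := G.flux_periodic t 0
        rw [zero_add] at this
        rw [this, sub_self]

lemma pot_le_dens (t θ : ℝ) : Q ^ 2 * (√(G.α t θ) * G.pot t θ) ≤ 4 * G.dens t θ := by
  have h1 := kin_nonneg G.α G.U t θ
  have h2 := kin_nonneg G.α G.A t θ
  have h3 := kin_nonneg G.α G.φ t θ
  have h4 := kin_nonneg G.α G.σ t θ
  have h5 : 0 ≤ Real.exp (4 * G.U t θ) / (4 * t ^ 2) * kin G.α G.A t θ := by positivity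
  have h6 : 0 ≤ Real.exp (2 * lam * G.φ t θ) * kin G.α G.σ t θ := by positivity
  unfold dens
  linarith

lemma kin_U_le_dens (t θ : ℝ) : kin G.α G.U t θ ≤ 4 * G.dens t θ := by
  have h1 := kin_nonneg G.α G.U t θ
  have h2 := kin_nonneg G.α G.A t θ
  have h3 := kin_nonneg G.α G.φ t θ
  have h4 := kin_nonneg G.α G.σ t θ
  have h5 : 0 ≤ Real.exp (4 * G.U t θ) / (4 * t ^ 2) * kin G.α G.A t θ := by positivity
  have h6 : 0 ≤ Real.exp (2 * lam * G.φ t θ) * kin G.α G.σ t θ := by positivity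
  have h7 : 0 ≤ Q ^ 2 * (√(G.α t θ) * G.pot t θ) := by unfold pot; positivity
  unfold dens
  linarith

lemma kin_φ_le_dens (t θ : ℝ) : kin G.α G.φ t θ ≤ 4 * G.dens t θ := by
  have h1 := kin_nonneg G.α G.U t θ
  have h2 := kin_nonneg G.α G.A t θ
  have h4 := kin_nonneg G.α G.σ t θ
  have h5 : 0 ≤ Real.exp (4 * G.U t θ) / (4 * t ^ 2) * kin G.α G.A t θ := by positivity
  have h6 : 0 ≤ Real.exp (2 * lam * G.φ t θ) * kin G.α G.σ t θ := by positivity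
  have h7 : 0 ≤ Q ^ 2 * (√(G.α t θ) * G.pot t θ) := by unfold pot; positivity
  unfold dens
  linarith

lemma pt_sqrt {t : ℝ} (ht : t ∈ Ioo Tm Tp) (θ : ℝ) :
    pt (fun t θ => √(G.α t θ)) t θ = -(t / 2 * √(G.α t θ) ^ 3 * Q ^ 2 * G.pot t θ) := by
  have hα0 := G.sys.alpha_pos t ht θ
  have hr0 : 0 < √(G.α t θ) := Real.sqrt_pos.2 hα0
  have h := ((G.smooth_α.hasDerivAt_pt ht θ).sqrt hα0.ne').deriv
  change pt (fun t θ => √(G.α t θ)) t θ = _ at h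
  rw [h, G.sys.constraint_α t ht θ, pot]
  have hsq : G.α t θ = √(G.α t θ) ^ 2 := (Real.sq_sqrt hα0.le).symm
  generalize √(G.α t θ) = r at *
  rw [hsq]
  field_simp

lemma smooth_inv_sqrt : StripSmooth Tm Tp (fun t θ => 1 / √(G.α t θ)) :=
  (StripSmooth.const 1).div G.smooth_sqrt fun t ht θ =>
    (Real.sqrt_pos.2 (G.sys.alpha_pos t ht θ)).ne'

lemma pt_inv_sqrt {t : ℝ} (ht : t ∈ Ioo Tm Tp) (θ : ℝ) :
    pt (fun t θ => 1 / √(G.α t θ)) t θ = t / 2 * (Q ^ 2 * (√(G.α t θ) * G.pot t θ)) := by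
  have hr0 : 0 < √(G.α t θ) := Real.sqrt_pos.2 (G.sys.alpha_pos t ht θ)
  have h := ((hasDerivAt_const t (1 : ℝ)).div (G.smooth_sqrt.hasDerivAt_pt ht θ) hr0.ne').deriv
  change pt (fun t θ => 1 / √(G.α t θ)) t θ = _ at h
  rw [h, G.pt_sqrt ht θ]
  field_simp
  ring

/-- `∫ α^(1/2)` is nonincreasing, since `α` is. -/
lemma integral_sqrt_antitone (hTm : 0 < Tm) :
    AntitoneOn (fun t => ∫ θ in (0 : ℝ)..(2 * π), √(G.α t θ)) (Ioo Tm Tp) := by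
  have hd := G.smooth_sqrt
  refine antitoneOn_of_deriv_nonpos (convex_Ioo _ _)
    (fun t ht => (hd.hasDerivAt_integral ht).continuousAt.continuousWithinAt)
    (fun t ht => ((hd.hasDerivAt_integral
      (interior_subset ht)).differentiableAt).differentiableWithinAt) ?_
  intro t ht
  replace ht := interior_subset ht
  have ht0 : 0 < t := hTm.trans ht.1
  rw [(hd.hasDerivAt_integral ht).deriv]
  rw [← neg_nonneg, ← intervalIntegral.integral_neg]
  refine intervalIntegral.integral_nonneg (by positivity) fun θ _ => ?_
  rw [G.pt_sqrt ht θ, neg_neg, pot]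
  positivity

/-- `∫ α^(-1/2)` grows at most linearly, its derivative being controlled by the energy. -/
lemma exists_bound_inv_sqrt {c : ℝ} (hTm : 0 < Tm) (hc : Tm < c) (hcT : c < Tp) :
    ∃ B, ∀ t ∈ Ico c Tp, |∫ θ in (0 : ℝ)..(2 * π), 1 / √(G.α t θ)| ≤ B := by
  have hpi : (0 : ℝ) ≤ 2 * π := by positivity
  have hsub : ∀ t ∈ Ico c Tp, t ∈ Ioo Tm Tp := fun t ht => ⟨hc.trans_le ht.1, ht.2⟩
  refine exists_bound_of_deriv_bound
    (K := 2 * Tp * ∫ θ in (0 : ℝ)..(2 * π), G.dens c θ)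
    (fun t ht => G.smooth_inv_sqrt.hasDerivAt_integral (hsub t ht)) fun t ht => ?_
  have htI := hsub t ht
  have ht0 : 0 < t := hTm.trans htI.1
  have hE := G.energy_antitone hTm ⟨hc, hcT⟩ htI ht.1
  have hcd := ((G.smooth_dens hTm).continuous_snd htI)
  refine (intervalIntegral.abs_integral_le_integral_abs hpi).trans ?_
  calc ∫ θ in (0 : ℝ)..(2 * π), |pt (fun t θ => 1 / √(G.α t θ)) t θ|
      ≤ ∫ θ in (0 : ℝ)..(2 * π), 2 * Tp * G.dens t θ := by
        refine intervalIntegral.integral_mono hpi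
          ((G.smooth_inv_sqrt.pt.continuous_snd htI).abs.intervalIntegrable _ _)
          ((hcd.const_mul _).intervalIntegrable _ _) fun θ => ?_
        have h0 : 0 ≤ Q ^ 2 * (√(G.α t θ) * G.pot t θ) := by unfold pot; positivity
        have h1 := G.pot_le_dens t θ
        have h2 := ht.2.le
        have h3 : 0 < Tp := ht0.trans ht.2
        simp only
        rw [G.pt_inv_sqrt htI θ, abs_of_nonneg (by positivity)]
        calc t / 2 * (Q ^ 2 * (√(G.α t θ) * G.pot t θ))
            ≤ Tp / 2 * (4 * G.dens t θ) := by gcongr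
          _ = 2 * Tp * G.dens t θ := by ring
    _ = 2 * Tp * ∫ θ in (0 : ℝ)..(2 * π), G.dens t θ := by
        rw [intervalIntegral.integral_const_mul]
    _ ≤ 2 * Tp * ∫ θ in (0 : ℝ)..(2 * π), G.dens c θ := by
        have : 0 ≤ Tp := (hTm.trans (hc.trans hcT)).le
        gcongr

/-- A periodic field whose own energy density is dominated by the total one is bounded. -/
lemma exists_bound_field {c : ℝ} (hTm : 0 < Tm) (hc : Tm < c) (hcT : c < Tp)
    {f : ℝ → ℝ → ℝ} (hf : StripSmooth Tm Tp f) (hper : ∀ t θ, f t (θ + 2 * π) = f t θ)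
    (hk : ∀ t θ, kin G.α f t θ ≤ 4 * G.dens t θ) :
    ∃ C, ∀ t ∈ Ico c Tp, ∀ θ, |f t θ| ≤ C := by
  have hpi : (0 : ℝ) ≤ 2 * π := by positivity
  obtain ⟨B, hB⟩ := G.exists_bound_inv_sqrt hTm hc hcT
  set E := ∫ θ in (0 : ℝ)..(2 * π), G.dens c θ
  set R := ∫ θ in (0 : ℝ)..(2 * π), √(G.α c θ)
  have hsub : ∀ t ∈ Ico c Tp, t ∈ Ioo Tm Tp := fun t ht => ⟨hc.trans_le ht.1, ht.2⟩
  have hEt : ∀ t ∈ Ico c Tp, ∫ θ in (0 : ℝ)..(2 * π), G.dens t θ ≤ E := fun t ht =>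
    G.energy_antitone hTm ⟨hc, hcT⟩ (hsub t ht) ht.1
  have hRt : ∀ t ∈ Ico c Tp, ∫ θ in (0 : ℝ)..(2 * π), √(G.α t θ) ≤ R := fun t ht =>
    G.integral_sqrt_antitone hTm ⟨hc, hcT⟩ (hsub t ht) ht.1
  -- Both `L¹` bounds come from `2|xy| ≤ x² + y²` with the weight `α^(1/4)` split between factors.
  refine exists_bound_of_L1_bounds (K := max (2 * E + R) (2 * E + B)) hc hf hper
    (fun t ht => le_max_of_le_left ?_) (fun t ht => le_max_of_le_right ?_)
  · have htI := hsub t ht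
    have hi1 := (((G.smooth_dens hTm).continuous_snd htI).const_mul 2).intervalIntegrable
      (μ := volume) 0 (2 * π)
    have hi2 := (G.smooth_sqrt.continuous_snd htI).intervalIntegrable (μ := volume) 0 (2 * π)
    calc ∫ θ in (0 : ℝ)..(2 * π), |pt f t θ|
        ≤ ∫ θ in (0 : ℝ)..(2 * π), (2 * G.dens t θ + √(G.α t θ)) := by
          refine intervalIntegral.integral_mono hpi
            ((hf.pt.continuous_snd htI).abs.intervalIntegrable _ _) (hi1.add hi2) fun θ => ?_
          have hr0 : 0 < √(G.α t θ) := Real.sqrt_pos.2 (G.sys.alpha_pos t htI θ)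
          have h1 := hk t θ
          unfold kin at h1
          have h2 : 0 ≤ √(G.α t θ) * pth f t θ ^ 2 := by positivity
          have h3 : 2 * |pt f t θ| ≤ pt f t θ ^ 2 / √(G.α t θ) + √(G.α t θ) := by
            rw [div_add' _ _ _ hr0.ne', le_div_iff₀ hr0]
            nlinarith [sq_nonneg (|pt f t θ| - √(G.α t θ)), sq_abs (pt f t θ)]
          simp only
          linarith
      _ = 2 * (∫ θ in (0 : ℝ)..(2 * π), G.dens t θ) + ∫ θ in (0 : ℝ)..(2 * π), √(G.α t θ) := by
          rw [intervalIntegral.integral_add hi1 hi2, intervalIntegral.integral_const_mul]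
      _ ≤ 2 * E + R := by linarith [hEt t ht, hRt t ht]
  · have htI := hsub t ht
    have hi1 := (((G.smooth_dens hTm).continuous_snd htI).const_mul 2).intervalIntegrable
      (μ := volume) 0 (2 * π)
    have hi2 := (G.smooth_inv_sqrt.continuous_snd htI).intervalIntegrable
      (μ := volume) 0 (2 * π)
    calc ∫ θ in (0 : ℝ)..(2 * π), |pth f t θ|
        ≤ ∫ θ in (0 : ℝ)..(2 * π), (2 * G.dens t θ + 1 / √(G.α t θ)) := by
          refine intervalIntegral.integral_mono hpi
            ((hf.pth.continuous_snd htI).abs.intervalIntegrable _ _) (hi1.add hi2) fun θ => ?_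
          have hr0 : 0 < √(G.α t θ) := Real.sqrt_pos.2 (G.sys.alpha_pos t htI θ)
          have h1 := hk t θ
          unfold kin at h1
          have h2 : 0 ≤ pt f t θ ^ 2 / √(G.α t θ) := by positivity
          have h4 : 0 < 1 / √(G.α t θ) := by positivity
          have h3 : 2 * |pth f t θ| ≤ √(G.α t θ) * pth f t θ ^ 2 + 1 / √(G.α t θ) := by
            rw [add_div' _ _ _ hr0.ne', le_div_iff₀ hr0, ← sq_abs (pth f t θ)]
            nlinarith [sq_nonneg (√(G.α t θ) * |pth f t θ| - 1)]
          simp only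
          linarith
      _ = 2 * (∫ θ in (0 : ℝ)..(2 * π), G.dens t θ)
          + ∫ θ in (0 : ℝ)..(2 * π), 1 / √(G.α t θ) := by
          rw [intervalIntegral.integral_add hi1 hi2, intervalIntegral.integral_const_mul]
      _ ≤ 2 * E + B := by linarith [hEt t ht, (abs_le.1 (hB t ht)).2]

end GowdySolution

theorem U_phi_bounded_future (Q lam Tm Tp t_i : ℝ) (hQ : Q ≠ 0) (hTm : 0 < Tm) (hti : Tm < t_i)
    (hTp : t_i < Tp) (G : GowdySolution Q lam Tm Tp) :
    ∃ C : ℝ, ∀ t ∈ Ico t_i Tp, ∀ θ : ℝ, |G.U t θ| ≤ C ∧ |G.φ t θ| ≤ C := by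
  obtain ⟨C₁, h₁⟩ := G.exists_bound_field hTm hti hTp G.smooth_U (G.periodic _ (by simp))
    G.kin_U_le_dens
  obtain ⟨C₂, h₂⟩ := G.exists_bound_field hTm hti hTp G.smooth_φ (G.periodic _ (by simp))
    G.kin_φ_le_dens
  exact ⟨max C₁ C₂, fun t ht θ =>
    ⟨(h₁ t ht θ).trans (le_max_left _ _), (h₂ t ht θ).trans (le_max_right _ _)⟩⟩

end
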